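/- Let Δ = {x ∈ ℝⁿ : x ≥ 0, 1ᵀx = 1} be the standard simplex with Euclidean projection Π_Δ, and let μ, v ∈ ℝⁿ. Define φ : ℝ → ℝ by φ(ν) = μᵀ Π_Δ(v + ν·μ). Then φ is nondecreasing and continuous on ℝ. -/

import Mathlib

/-- The standard probability simplex `Δ = {x : x ≥ 0, 1ᵀx = 1}` in Euclidean space. -/
def stdSimplex' (n : ℕ) : Set (EuclideanSpace ℝ (Fin n)) :=
  {x | (∀ i, 0 ≤ x i) ∧ (∑ i, x i) = 1}

/-!
Let `P` send each point to a nearest point of `K`. Using `P x` and `P y` as competitors in each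
other's minimisation problem shows that `P` is a monotone operator, and a monotone operator gives a
monotone function along every line. For convex `K`, adding the variational inequalities at `x` and
`y` sharpens this to `‖P x - P y‖² ≤ ⟪x - y, P x - P y⟫`, and Cauchy–Schwarz makes `P` nonexpansive.
-/

open scoped RealInnerProductSpace

theorem convex_stdSimplex' (n : ℕ) : Convex ℝ (stdSimplex' n) :=
  (convex_stdSimplex ℝ (Fin n)).linear_preimage (WithLp.linearEquiv 2 ℝ (Fin n → ℝ)).toLinearMap

section InnerProductSpace

variable {E : Type*} [NormedAddCommGroup E] [InnerProductSpace ℝ E]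

theorem monotone_inner_apply_add_smul {F : E → E} (hF : ∀ x y, 0 ≤ ⟪x - y, F x - F y⟫) (u v : E) :
    Monotone fun t : ℝ => ⟪u, F (v + t • u)⟫ := by
  refine monotone_iff_forall_lt.2 fun s t hst => ?_
  have h : 0 ≤ (t - s) * (⟪u, F (v + t • u)⟫ - ⟪u, F (v + s • u)⟫) := by
    simpa only [add_sub_add_left_eq_sub, ← sub_smul, real_inner_smul_left, ← inner_sub_right]
      using hF (v + t • u) (v + s • u)
  exact sub_nonneg.1 (nonneg_of_mul_nonneg_right h (sub_pos.2 hst))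

/-- `P` is a metric projection onto `K`: it sends every point to a nearest point of `K`. It is a
predicate on `P` rather than a chosen map, so that `K` need not be convex or complete. -/
def IsMetricProjection (K : Set E) (P : E → E) : Prop :=
  ∀ w, P w ∈ K ∧ ∀ z ∈ K, ‖w - P w‖ ≤ ‖w - z‖

namespace IsMetricProjection

variable {K : Set E} {P : E → E}

theorem inner_sub_sub_nonneg (hP : IsMetricProjection K P) (x y : E) :
    0 ≤ ⟪x - y, P x - P y⟫ := by
  have hx : ‖x - P x‖ ^ 2 ≤ ‖x - P y‖ ^ 2 := by gcongr; exact (hP x).2 _ (hP y).1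
  have hy : ‖y - P y‖ ^ 2 ≤ ‖y - P x‖ ^ 2 := by gcongr; exact (hP y).2 _ (hP x).1
  simp only [norm_sub_sq_real] at hx hy
  simp only [inner_sub_left, inner_sub_right]
  linarith

theorem inner_sub_map_sub_map_nonpos (hP : IsMetricProjection K P) (hK : Convex ℝ K) (w : E) {z : E}
    (hz : z ∈ K) : ⟪w - P w, z - P w⟫ ≤ 0 := by
  obtain ⟨hmem, hmin⟩ := hP w
  have hleast : IsLeast (Set.range fun z : K => ‖w - z‖) ‖w - P w‖ :=
    ⟨⟨⟨P w, hmem⟩, rfl⟩, Set.forall_mem_range.2 fun z => hmin z z.2⟩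
  exact (norm_eq_iInf_iff_real_inner_le_zero hK hmem).1 hleast.csInf_eq.symm z hz

theorem norm_map_sub_map_sq_le_inner (hP : IsMetricProjection K P) (hK : Convex ℝ K) (x y : E) :
    ‖P x - P y‖ ^ 2 ≤ ⟪x - y, P x - P y⟫ := by
  have hx : ⟪x - P x, P y - P x⟫ ≤ 0 := hP.inner_sub_map_sub_map_nonpos hK x (hP y).1
  have hy : ⟪y - P y, P x - P y⟫ ≤ 0 := hP.inner_sub_map_sub_map_nonpos hK y (hP x).1
  rw [← real_inner_self_eq_norm_sq]
  simp only [inner_sub_left, inner_sub_right] at hx hy ⊢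
  linarith

theorem lipschitzWith_one (hP : IsMetricProjection K P) (hK : Convex ℝ K) : LipschitzWith 1 P := by
  refine LipschitzWith.mk_one fun x y => ?_
  rw [dist_eq_norm, dist_eq_norm]
  have h : ‖P x - P y‖ ^ 2 ≤ ‖x - y‖ * ‖P x - P y‖ :=
    (hP.norm_map_sub_map_sq_le_inner hK x y).trans (real_inner_le_norm _ _)
  obtain hzero | hpos := (norm_nonneg (P x - P y)).eq_or_lt
  · exact hzero ▸ norm_nonneg (x - y)
  · exact le_of_mul_le_mul_right (by rwa [← sq]) hpos

end IsMetricProjection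

theorem dual_path_monotone_continuous_general {K : Set E} (hK : Convex ℝ K) {P : E → E}
    (hP : IsMetricProjection K P) (u v : E) :
    Monotone (fun t : ℝ => ⟪u, P (v + t • u)⟫) ∧ Continuous (fun t : ℝ => ⟪u, P (v + t • u)⟫) := by
  have hcont : Continuous P := (hP.lipschitzWith_one hK).continuous
  exact ⟨monotone_inner_apply_add_smul hP.inner_sub_sub_nonneg u v, by fun_prop⟩

end InnerProductSpace

/-- Let `Π_Δ` be the Euclidean projection onto the standard simplex
`Δ`, and let `μ, v ∈ ℝⁿ`. Then `φ(ν) = μᵀ Π_Δ(v + ν μ)` is nondecreasing and continuous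
on `ℝ`. -/
theorem dual_path_monotone_continuous {n : ℕ}
    (projD : EuclideanSpace ℝ (Fin n) → EuclideanSpace ℝ (Fin n))
    (hproj : ∀ w, projD w ∈ stdSimplex' n ∧ ∀ z ∈ stdSimplex' n, ‖w - projD w‖ ≤ ‖w - z‖)
    (μ v : EuclideanSpace ℝ (Fin n)) :
    Monotone (fun ν : ℝ => ∑ i, μ i * projD (v + ν • μ) i) ∧
      Continuous (fun ν : ℝ => ∑ i, μ i * projD (v + ν • μ) i) := by
  simpa only [PiLp.inner_apply, Real.inner_apply] using
    dual_path_monotone_continuous_general (convex_stdSimplex' n) hproj μ v
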